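/- For any discrete memoryless channel W: X → Y on finite alphabets, the order-0 reliability function satisfies E_rf^{(0)}(W,r) = ∞ for every r > I_0(W), and E_rf^{(0)}(W,r) = 0 for every r with 0 ≤ r < I_0(W). -/

import Mathlib

open scoped ENNReal NNReal BigOperators Classical
open Filter

noncomputable section

namespace RST

/-- Base-2 logarithm `ℝ≥0∞ → EReal`, with `log 0 = ⊥` and `log ⊤ = ⊤`. -/
def elog2 (s : ℝ≥0∞) : EReal :=
  if s = 0 then ⊥ else if s = ⊤ then ⊤ else ((Real.logb 2 s.toReal : ℝ) : EReal)

/-- Base-2 logarithm `EReal → EReal` (for nonnegative arguments). -/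
def eLog2 (x : EReal) : EReal :=
  if x = ⊤ then ⊤ else if x ≤ 0 then ⊥ else ((Real.logb 2 x.toReal : ℝ) : EReal)

/-- Base-2 exponential `EReal → ℝ≥0∞`. -/
def epow2 (x : EReal) : ℝ≥0∞ :=
  if x = ⊤ then ⊤ else if x = ⊥ then 0 else ENNReal.ofReal ((2 : ℝ) ^ x.toReal)

variable {X Y : Type*}

/-- A probability distribution on a finite alphabet, as an `ℝ≥0∞`-valued function. -/
def IsDist [Fintype X] (P : X → ℝ≥0∞) : Prop := ∑ x, P x = 1

/-- A discrete memoryless channel: every row is a probability distribution. -/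
def IsChannel [Fintype X] [Fintype Y] (W : X → Y → ℝ≥0∞) : Prop := ∀ x, ∑ y, W x y = 1

/-- Order-`α` Rényi divergence (base 2), with the order `α ∈ [0,∞]` encoded as `ℝ≥0∞`.
The conventions `0/0 = 0` and `a/0 = ∞` (for `a > 0`, `α > 1`) are built into `ℝ≥0∞`
arithmetic.  The second argument is allowed to be an arbitrary nonnegative vector. -/
def renyiD [Fintype X] (α : ℝ≥0∞) (P Q : X → ℝ≥0∞) : EReal :=
  if α = 0 then - elog2 (∑ x ∈ Finset.univ.filter fun x => P x ≠ 0, Q x)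
  else if α = 1 then ∑ x, ((P x).toReal : EReal) * elog2 (P x / Q x)
  else if α = ⊤ then elog2 (⨆ x, P x / Q x)
  else (((α.toReal - 1)⁻¹ : ℝ) : EReal) *
    elog2 (∑ x, P x ^ α.toReal * Q x ^ (1 - α.toReal))

/-- The `X`-marginal of a joint distribution on `X × Y`. -/
def margX [Fintype X] [Fintype Y] (P : X × Y → ℝ≥0∞) : X → ℝ≥0∞ := fun x => ∑ y, P (x, y)

/-- Order-`α` Rényi mutual information `I_α(X:Y)_P = min_{Q_Y} D_α(P‖P_X × Q_Y)`. -/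
def renyiMI [Fintype X] [Fintype Y] (α : ℝ≥0∞) (P : X × Y → ℝ≥0∞) : EReal :=
  ⨅ Q : {Q : Y → ℝ≥0∞ // IsDist Q}, renyiD α P fun p => margX P p.1 * Q.1 p.2

/-- The joint input-output distribution `P_X · W`. -/
def joint [Fintype X] [Fintype Y] (PX : X → ℝ≥0∞) (W : X → Y → ℝ≥0∞) : X × Y → ℝ≥0∞ :=
  fun p => PX p.1 * W p.1 p.2

/-- Order-`α` Rényi capacity `I_α(W) = max_{P_X} I_α(X:Y)_{P_X · W}`. -/
def renyiCap [Fintype X] [Fintype Y] (α : ℝ≥0∞) (W : X → Y → ℝ≥0∞) : EReal :=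
  ⨆ P : {P : X → ℝ≥0∞ // IsDist P}, renyiMI α (joint P.1 W)

/-- `N` is a simulation of a channel `X → Y` with communication cost at most `c` bits:
shared randomness `K = Fin m` with distribution `PK`, a message set `{1,…,M}` with
`log₂ M ≤ c`, an encoder `E` and a decoder `D`. -/
def IsSimulation [Fintype X] [Fintype Y] (c : ℝ) (N : X → Y → ℝ≥0∞) : Prop :=
  ∃ (m M : ℕ) (PK : Fin m → ℝ≥0∞) (E : X → Fin m → Fin M → ℝ≥0∞)
    (D : Fin M → Fin m → Y → ℝ≥0∞),
    0 < M ∧ Real.logb 2 M ≤ c ∧ (∑ k, PK k = 1) ∧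
    (∀ x k, ∑ j, E x k j = 1) ∧ (∀ j k, ∑ y, D j k y = 1) ∧
    ∀ x y, N x y = ∑ k, ∑ j, PK k * E x k j * D j k y

/-- `D_α(W, N) := max_x D_α(W(·|x) ‖ N(·|x))`. -/
def chD [Fintype X] [Fintype Y] (α : ℝ≥0∞) (W N : X → Y → ℝ≥0∞) : EReal :=
  ⨆ x, renyiD α (W x) (N x)

/-- `𝖣_α(W, c) := min_{N ∈ A(W,c)} D_α(W, N)`. -/
def simD [Fintype X] [Fintype Y] (α : ℝ≥0∞) (W : X → Y → ℝ≥0∞) (c : ℝ) : EReal :=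
  ⨅ N : {N : X → Y → ℝ≥0∞ // IsSimulation c N}, chD α W N.1

/-- The `n`-fold memoryless extension `W^{×n}` of a channel `W`. -/
def prodCh [Fintype X] [Fintype Y] (n : ℕ) (W : X → Y → ℝ≥0∞) :
    (Fin n → X) → (Fin n → Y) → ℝ≥0∞ :=
  fun xs ys => ∏ i, W (xs i) (ys i)

/-- A sequence of communication costs with rate at most `r`. -/
def RateOK (r : ℝ) (c : ℕ → ℝ) : Prop :=
  (∀ n, 0 ≤ c n) ∧ Filter.limsup (fun n : ℕ => ((c n / n : ℝ) : EReal)) Filter.atTop ≤ (r : EReal)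

/-- Reliability function `E_rf^{(α)}(W, r)`. -/
def Erf [Fintype X] [Fintype Y] (α : ℝ≥0∞) (W : X → Y → ℝ≥0∞) (r : ℝ) : EReal :=
  ⨆ c : {c : ℕ → ℝ // RateOK r c},
    Filter.liminf
      (fun n : ℕ => (((-1 : ℝ) / n : ℝ) : EReal) * eLog2 (simD α (prodCh n W) (c.1 n)))
      Filter.atTop

/-- Strong converse exponent `E_sc^{(α)}(W, r)`. -/
def Esc [Fintype X] [Fintype Y] (α : ℝ≥0∞) (W : X → Y → ℝ≥0∞) (r : ℝ) : EReal :=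
  ⨅ c : {c : ℕ → ℝ // RateOK r c},
    Filter.limsup
      (fun n : ℕ => (((1 : ℝ) / n : ℝ) : EReal) * simD α (prodCh n W) (c.1 n))
      Filter.atTop

/-- The `α`-Rényi simulation rate `R_RST^{(α)}(W)`. -/
def Rrst [Fintype X] [Fintype Y] (α : ℝ≥0∞) (W : X → Y → ℝ≥0∞) : EReal :=
  ⨅ c : {c : ℕ → ℝ // (∀ n, 0 ≤ c n) ∧
      Filter.limsup (fun n : ℕ => simD α (prodCh n W) (c n)) Filter.atTop = 0},
    Filter.limsup (fun n : ℕ => ((c.1 n / n : ℝ) : EReal)) Filter.atTop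

/-- n-fold product of a joint distribution on `X × Y`, as a distribution on pairs of
sequences. -/
def prodJoint [Fintype X] [Fintype Y] (n : ℕ) (P : X × Y → ℝ≥0∞) :
    (Fin n → X) × (Fin n → Y) → ℝ≥0∞ :=
  fun p => ∏ i, P (p.1 i, p.2 i)

/-- n-fold product distribution. -/
def prodDist [Fintype X] (n : ℕ) (P : X → ℝ≥0∞) : (Fin n → X) → ℝ≥0∞ :=
  fun xs => ∏ i, P (xs i)

/-- The type (empirical count vector) of a sequence. -/
def seqType [Fintype Y] [DecidableEq Y] {n : ℕ} (ys : Fin n → Y) : Y → ℕ :=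
  fun y => (Finset.univ.filter fun i => ys i = y).card

/-- The cardinality of the type class of a sequence. -/
def typeClassCard [Fintype Y] [DecidableEq Y] {n : ℕ} (ys : Fin n → Y) : ℕ :=
  (Finset.univ.filter fun zs : Fin n → Y => seqType zs = seqType ys).card

/-- The number of types of sequences in `Y^n`. -/
def numTypes (Y : Type*) [Fintype Y] [DecidableEq Y] (n : ℕ) : ℕ :=
  (Finset.univ.image fun ys : Fin n → Y => seqType ys).card

/-- `Φ_{Y^n}`: the uniform mixture over type classes of `Y^n`. -/
def PhiY (Y : Type*) [Fintype Y] [DecidableEq Y] (n : ℕ) : (Fin n → Y) → ℝ≥0∞ :=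
  fun ys => ((numTypes Y n : ℝ≥0∞) * (typeClassCard ys : ℝ≥0∞))⁻¹

end RST

namespace RST

/-!
The order-`0` divergence sees a channel only through its supports: `I_0(W)` is the largest `r`
such that some input distribution gives mass at most `2 ^ (-r)` to the inputs compatible with any
single output, and `W` is simulated with divergence `0` as soon as every input is mapped to a
compatible output.

Below capacity, a simulation of cost `c` is dominated by `2 ^ c` times a fixed output
distribution. Averaging against the `n`-th power of a near-optimal input distribution with
`r' > r` shows that the divergence is at least `r' * n - c`, hence eventually at least `1`; it is
also at most linear in `n`, since a uniformly random output costs nothing. So the exponent is `0`.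

Above capacity, every weight on the inputs has an output compatible with a fraction `2 ^ (-r')` of
it, where `r' < r`. This passes to powers, and choosing outputs greedily shrinks the set of
uncovered inputs by the factor `1 - 2 ^ (-r' * n)` each time. Hence `2 ^ (r * n)` outputs
eventually cover all `|X| ^ n` inputs, the divergence is `0`, and the exponent is infinite.
-/

section Logarithm

lemma elog2_le_coe_iff {s : ℝ≥0∞} {b : ℝ} : elog2 s ≤ b ↔ s ≤ 2 ^ b := by
  have hb : (2 : ℝ≥0∞) ^ b ≠ ⊤ := by finiteness
  unfold elog2
  split_ifs with h0 h1
  · simp [h0]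
  · simp [h1, hb]
  · rw [EReal.coe_le_coe_iff,
      Real.logb_le_iff_le_rpow one_lt_two (ENNReal.toReal_pos h0 h1),
      ← ENNReal.toReal_le_toReal h1 hb, ← ENNReal.toReal_rpow, ENNReal.toReal_ofNat]

lemma coe_le_elog2_iff {s : ℝ≥0∞} {b : ℝ} : b ≤ elog2 s ↔ 2 ^ b ≤ s := by
  have hb : (2 : ℝ≥0∞) ^ b ≠ ⊤ := by finiteness
  unfold elog2
  split_ifs with h0 h1
  · simp [h0, ENNReal.rpow_eq_zero_iff]
  · simp [h1]
  · rw [EReal.coe_le_coe_iff,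
      Real.le_logb_iff_rpow_le one_lt_two (ENNReal.toReal_pos h0 h1),
      ← ENNReal.toReal_le_toReal hb h1, ← ENNReal.toReal_rpow, ENNReal.toReal_ofNat]

lemma eLog2_of_nonpos {x : EReal} (hx : x ≤ 0) : eLog2 x = ⊥ := by
  rw [eLog2, if_neg (ne_top_of_le_ne_top EReal.zero_ne_top hx), if_pos hx]

lemma eLog2_nonneg {x : EReal} (hx : 1 ≤ x) : 0 ≤ eLog2 x := by
  unfold eLog2
  split_ifs with htop hnonpos
  · exact le_top
  · exact absurd (hx.trans hnonpos) (not_le.2 zero_lt_one)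
  · exact EReal.coe_nonneg.2 <|
      Real.logb_nonneg one_lt_two (EReal.toReal_le_toReal hx (EReal.coe_ne_bot 1) htop)

lemma eLog2_le_coe_logb {x : EReal} {b : ℝ} (hx : x ≤ b) : eLog2 x ≤ Real.logb 2 b := by
  unfold eLog2
  split_ifs with htop hnonpos
  · exact absurd hx (by simp [htop])
  · exact bot_le
  · rw [not_le] at hnonpos
    exact EReal.coe_le_coe_iff.2 <| Real.logb_le_logb_of_le one_lt_two
      (EReal.toReal_pos hnonpos htop)
      (EReal.toReal_le_toReal hx (ne_bot_of_gt hnonpos) (EReal.coe_ne_top b))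

end Logarithm

section Distribution

variable {A : Type*} [Fintype A] {P : A → ℝ≥0∞}

lemma isDist_ite_eq (a : A) : IsDist fun x => if x = a then (1 : ℝ≥0∞) else 0 := by
  simp [IsDist]

lemma isDist_prodDist (hP : IsDist P) (n : ℕ) : IsDist (prodDist n P) := by
  rw [IsDist, ← one_pow n, ← show ∑ x, P x = 1 from hP, Fintype.sum_pow]
  rfl

lemma IsDist.sum_mul_le (hP : IsDist P) {f : A → ℝ≥0∞} {b : ℝ≥0∞} (hf : ∀ a, f a ≤ b) :
    ∑ a, P a * f a ≤ b :=
  calc ∑ a, P a * f a ≤ ∑ a, P a * b := by gcongr with a; exact hf a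
    _ = b := by rw [← Finset.sum_mul, hP, one_mul]

lemma IsDist.exists_le_sum_mul (hP : IsDist P) (f : A → ℝ≥0∞) :
    ∃ a, f a ≤ ∑ a, P a * f a := by
  have : Nonempty A := not_isEmpty_iff.1 fun _ => by simp [IsDist] at hP
  obtain ⟨a, ha⟩ := Finite.exists_min f
  refine ⟨a, ?_⟩
  calc f a = ∑ x, P x * f a := by rw [← Finset.sum_mul, hP, one_mul]
    _ ≤ ∑ x, P x * f x := by gcongr with x; exact ha x

end Distribution

section CompatibleMass

variable {A B : Type*} [Fintype A]

/-- The mass that the weight `P` puts on the inputs of `V` compatible with the output `y`, that is,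
those from which `y` has positive probability. `P` need not be normalized. -/
def compatMass (V : A → B → ℝ≥0∞) (P : A → ℝ≥0∞) (y : B) : ℝ≥0∞ := ∑ x with V x y ≠ 0, P x

lemma IsDist.compatMass_le_one {P : A → ℝ≥0∞} (hP : IsDist P) (V : A → B → ℝ≥0∞) (y : B) :
    compatMass V P y ≤ 1 :=
  (Finset.sum_le_univ_sum_of_nonneg fun _ => zero_le).trans_eq hP

end CompatibleMass

section OrderZero

variable {A B : Type*} [Fintype A] [Fintype B]

lemma renyiD_zero_le_coe_iff {P Q : B → ℝ≥0∞} {d : ℝ} :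
    renyiD 0 P Q ≤ d ↔ 2 ^ (-d) ≤ ∑ y with P y ≠ 0, Q y := by
  rw [renyiD, if_pos rfl, EReal.neg_le, ← EReal.coe_neg, coe_le_elog2_iff]

lemma coe_le_renyiD_zero_iff {P Q : B → ℝ≥0∞} {d : ℝ} :
    d ≤ renyiD 0 P Q ↔ ∑ y with P y ≠ 0, Q y ≤ 2 ^ (-d) := by
  rw [renyiD, if_pos rfl, EReal.le_neg, ← EReal.coe_neg, elog2_le_coe_iff]

lemma renyiD_zero_le_of_le_apply {P Q : B → ℝ≥0∞} {d : ℝ} {y : B} (hP : P y ≠ 0)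
    (hQ : 2 ^ (-d) ≤ Q y) : renyiD 0 P Q ≤ d :=
  renyiD_zero_le_coe_iff.2 <| hQ.trans <|
    Finset.single_le_sum_of_canonicallyOrdered (by simpa using hP)

lemma sum_mul_sum_support (V : A → B → ℝ≥0∞) (P : A → ℝ≥0∞) (Q : B → ℝ≥0∞) :
    ∑ x, P x * ∑ y with V x y ≠ 0, Q y = ∑ y, Q y * compatMass V P y := by
  simp only [compatMass, Finset.sum_filter, Finset.mul_sum, mul_ite, mul_zero]
  rw [Finset.sum_comm]
  simp only [mul_comm]

lemma margX_joint {W : A → B → ℝ≥0∞} (hW : IsChannel W) (P : A → ℝ≥0∞) :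
    margX (joint P W) = P := by
  funext x
  simp only [margX, joint]
  rw [← Finset.mul_sum, hW x, mul_one]

lemma sum_support_joint (W : A → B → ℝ≥0∞) (P : A → ℝ≥0∞) (Q : B → ℝ≥0∞) :
    ∑ p with joint P W p ≠ 0, P p.1 * Q p.2 = ∑ y, Q y * compatMass W P y := by
  rw [← sum_mul_sum_support, Finset.sum_filter, Fintype.sum_prod_type]
  refine Finset.sum_congr rfl fun x _ => ?_
  rw [Finset.mul_sum, Finset.sum_filter]
  refine Finset.sum_congr rfl fun y _ => ?_
  by_cases hx : P x = 0 <;> simp [joint, hx]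

lemma coe_le_renyiMI_zero_joint_iff {W : A → B → ℝ≥0∞} (hW : IsChannel W) {P : A → ℝ≥0∞}
    {r : ℝ} : r ≤ renyiMI 0 (joint P W) ↔ ∀ y, compatMass W P y ≤ 2 ^ (-r) := by
  simp only [renyiMI, le_iInf_iff, coe_le_renyiD_zero_iff, margX_joint hW, sum_support_joint,
    Subtype.forall]
  refine ⟨fun h y => ?_, fun h Q hQ => hQ.sum_mul_le h⟩
  simpa using h _ (isDist_ite_eq y)

lemma compatMass_le_of_coe_lt_renyiCap_zero {W : A → B → ℝ≥0∞} (hW : IsChannel W) {r : ℝ}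
    (hr : r < renyiCap 0 W) :
    ∃ P : A → ℝ≥0∞, IsDist P ∧ ∀ y, compatMass W P y ≤ 2 ^ (-r) := by
  obtain ⟨⟨P, hP⟩, hrP⟩ := lt_iSup_iff.1 hr
  exact ⟨P, hP, (coe_le_renyiMI_zero_joint_iff hW).1 hrP.le⟩

lemma exists_lt_compatMass_of_renyiCap_zero_lt {W : A → B → ℝ≥0∞} (hW : IsChannel W) {r : ℝ}
    (hr : renyiCap 0 W < r) {P : A → ℝ≥0∞} (hP : IsDist P) :
    ∃ y, 2 ^ (-r) < compatMass W P y := by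
  by_contra! h
  exact hr.not_ge <| ((coe_le_renyiMI_zero_joint_iff hW).2 h).trans <|
    le_iSup (fun P : {P : A → ℝ≥0∞ // IsDist P} => renyiMI 0 (joint P.1 W)) ⟨P, hP⟩

lemma renyiCap_zero_nonneg [Nonempty A] {W : A → B → ℝ≥0∞} (hW : IsChannel W) :
    0 ≤ renyiCap 0 W := by
  have hP := isDist_ite_eq (Classical.arbitrary A)
  refine le_iSup_of_le ⟨_, hP⟩ ?_
  rw [← EReal.coe_zero, coe_le_renyiMI_zero_joint_iff hW]
  intro y
  simpa using hP.compatMass_le_one W y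

end OrderZero

section Simulation

variable {A B : Type*} [Fintype A] [Fintype B] {V : A → B → ℝ≥0∞} {c d : ℝ}

lemma isSimulation_of_code {M : ℕ} (hM : 0 < M) (hc : Real.logb 2 M ≤ c) (e : A → Fin M)
    {q : Fin M → B → ℝ≥0∞} (hq : ∀ j, IsDist (q j)) : IsSimulation c fun x => q (e x) :=
  ⟨1, M, fun _ => 1, fun x _ j => if j = e x then 1 else 0, fun j _ => q j, hM, hc, by simp,
    by simp, fun j _ => hq j, by simp⟩

lemma simD_le {α : ℝ≥0∞} {N : A → B → ℝ≥0∞} {D : EReal} (hN : IsSimulation c N)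
    (h : ∀ x, renyiD α (V x) (N x) ≤ D) : simD α V c ≤ D :=
  iInf_le_of_le ⟨N, hN⟩ (iSup_le h)

lemma simD_zero_nonpos_of_cover {M : ℕ} (hM : 0 < M) (hc : Real.logb 2 M ≤ c) {f : Fin M → B}
    (hf : ∀ x, ∃ j, V x (f j) ≠ 0) : simD 0 V c ≤ 0 := by
  choose e he using hf
  refine simD_le (isSimulation_of_code hM hc e fun j => isDist_ite_eq (f j)) fun x => ?_
  rw [← EReal.coe_zero]
  exact renyiD_zero_le_of_le_apply (he x) (by simp)

lemma simD_zero_cost_zero_le_logb_card (hV : ∀ x, ∃ y, V x y ≠ 0) [Nonempty B] :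
    simD 0 V 0 ≤ Real.logb 2 (Fintype.card B) := by
  have hunif : IsDist fun _ : B => (Fintype.card B : ℝ≥0∞)⁻¹ := by
    simpa [IsDist] using ENNReal.mul_inv_cancel (a := Fintype.card B) (by simp) (by simp)
  refine simD_le (isSimulation_of_code one_pos (by simp) 0 fun _ => hunif) fun x => ?_
  obtain ⟨y, hy⟩ := hV x
  have hcard : (2 : ℝ≥0∞) ^ Real.logb 2 (Fintype.card B) = Fintype.card B := by
    rw [← ENNReal.ofReal_ofNat 2, ENNReal.ofReal_rpow_of_pos two_pos,
      Real.rpow_logb two_pos one_lt_two.ne' (by exact_mod_cast Fintype.card_pos),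
      ENNReal.ofReal_natCast]
  exact renyiD_zero_le_of_le_apply hy (by rw [ENNReal.rpow_neg, hcard])

lemma IsSimulation.exists_isDist_le_mul {N : A → B → ℝ≥0∞} (hN : IsSimulation c N) :
    ∃ Q : B → ℝ≥0∞, IsDist Q ∧ ∀ x y, N x y ≤ 2 ^ c * Q y := by
  obtain ⟨m, M, PK, E, D, hM, hMc, hPK, hE, hD, hN⟩ := hN
  have hM0 : (M : ℝ≥0∞) ≠ 0 := by simpa using hM.ne'
  have hM2 : (M : ℝ≥0∞) ≤ 2 ^ c := by
    have : (M : ℝ) ≤ 2 ^ c :=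
      (Real.logb_le_iff_le_rpow one_lt_two (by exact_mod_cast hM)).1 hMc
    simpa [← ENNReal.ofReal_rpow_of_pos] using ENNReal.ofReal_le_ofReal this
  have hE1 x k j : E x k j ≤ 1 := by
    rw [← hE x k]
    exact Finset.single_le_sum_of_canonicallyOrdered (Finset.mem_univ j)
  -- `Q` is the output distribution when the message is uniform and independent of the input.
  refine ⟨fun y => (M : ℝ≥0∞)⁻¹ * ∑ k, ∑ j, PK k * D j k y, ?_, fun x y => ?_⟩
  · calc ∑ y, (M : ℝ≥0∞)⁻¹ * ∑ k, ∑ j, PK k * D j k y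
        = (M : ℝ≥0∞)⁻¹ * ∑ k, ∑ j, PK k * ∑ y, D j k y := by
          rw [← Finset.mul_sum, Finset.sum_comm]
          simp only [Finset.sum_comm (s := (Finset.univ : Finset B)), Finset.mul_sum]
      _ = (M : ℝ≥0∞)⁻¹ * M := by
          simp [hD, ← Finset.mul_sum, hPK]
      _ = 1 := ENNReal.inv_mul_cancel hM0 (ENNReal.natCast_ne_top M)
  · calc N x y = ∑ k, ∑ j, PK k * E x k j * D j k y := hN x y
      _ ≤ ∑ k, ∑ j, PK k * 1 * D j k y := by gcongr with k _ j; exact hE1 x k j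
      _ = M * ((M : ℝ≥0∞)⁻¹ * ∑ k, ∑ j, PK k * D j k y) := by
          rw [ENNReal.mul_inv_cancel_left hM0 (ENNReal.natCast_ne_top M)]
          simp only [mul_one]
      _ ≤ 2 ^ c * ((M : ℝ≥0∞)⁻¹ * ∑ k, ∑ j, PK k * D j k y) := by gcongr

lemma coe_sub_le_simD_zero {P : A → ℝ≥0∞} (hP : IsDist P)
    (hd : ∀ y, compatMass V P y ≤ 2 ^ (-d)) : ((d - c : ℝ) : EReal) ≤ simD 0 V c := by
  refine le_iInf fun ⟨N, hN⟩ => ?_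
  obtain ⟨Q, hQ, hNQ⟩ := hN.exists_isDist_le_mul
  obtain ⟨x, hx⟩ := hP.exists_le_sum_mul fun x => ∑ y with V x y ≠ 0, Q y
  refine le_iSup_of_le x <| coe_le_renyiD_zero_iff.2 ?_
  calc ∑ y with V x y ≠ 0, N x y ≤ ∑ y with V x y ≠ 0, 2 ^ c * Q y := by
        gcongr with y; exact hNQ x y
    _ ≤ 2 ^ c * ∑ y, Q y * compatMass V P y := by
        rw [← Finset.mul_sum, ← sum_mul_sum_support]; gcongr
    _ ≤ 2 ^ c * 2 ^ (-d) := by gcongr; exact hQ.sum_mul_le hd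
    _ = 2 ^ (-(d - c)) := by
        rw [← ENNReal.rpow_add _ _ two_ne_zero ENNReal.ofNat_ne_top, neg_sub, sub_eq_add_neg]

end Simulation

section MemorylessExtension

variable {A B : Type*} [Fintype A] [Fintype B] {W : A → B → ℝ≥0∞} {n : ℕ}

lemma prodCh_ne_zero_iff {x : Fin n → A} {y : Fin n → B} :
    prodCh n W x y ≠ 0 ↔ ∀ i, W (x i) (y i) ≠ 0 := by
  simp [prodCh, Finset.prod_ne_zero_iff]

lemma IsChannel.exists_ne_zero (hW : IsChannel W) (x : A) : ∃ y, W x y ≠ 0 := by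
  by_contra! h
  simpa [h] using hW x

lemma IsChannel.exists_prodCh_ne_zero (hW : IsChannel W) (x : Fin n → A) :
    ∃ y, prodCh n W x y ≠ 0 := by
  choose f hf using hW.exists_ne_zero
  exact ⟨fun i => f (x i), prodCh_ne_zero_iff.2 fun i => hf (x i)⟩

lemma compatMass_prodCh_prodDist (W : A → B → ℝ≥0∞) (P : A → ℝ≥0∞) (y : Fin n → B) :
    compatMass (prodCh n W) (prodDist n P) y = ∏ i, compatMass W P (y i) := by
  simp only [compatMass, Finset.prod_univ_sum, prodDist]
  refine Finset.sum_congr ?_ fun _ _ => rfl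
  ext x
  simp [prodCh_ne_zero_iff]

lemma sum_eq_sum_sum_cons {M : Type*} [AddCommMonoid M] (f : (Fin (n + 1) → A) → M) :
    ∑ x, f x = ∑ x : Fin n → A, ∑ a, f (Fin.cons a x) := by
  rw [← (Fin.consEquiv fun _ => A).sum_comp, Fintype.sum_prod_type_right]
  rfl

lemma prodCh_cons (a : A) (x : Fin n → A) (b : B) (y : Fin n → B) :
    prodCh (n + 1) W (Fin.cons a x) (Fin.cons b y) = W a b * prodCh n W x y := by
  simp [prodCh, Fin.prod_univ_succ]

lemma compatMass_prodCh_cons (g : (Fin (n + 1) → A) → ℝ≥0∞) (b : B) (y : Fin n → B) :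
    compatMass (prodCh (n + 1) W) g (Fin.cons b y) =
      compatMass (prodCh n W) (fun x => compatMass W (fun a => g (Fin.cons a x)) b) y := by
  simp only [compatMass, Finset.sum_filter, sum_eq_sum_sum_cons, prodCh_cons, mul_ne_zero_iff]
  refine Finset.sum_congr rfl fun x _ => ?_
  by_cases hx : prodCh n W x y = 0 <;> simp [hx]

lemma coe_mul_sub_le_simD_zero_prodCh (hW : IsChannel W) {r : ℝ} (hr : r < renyiCap 0 W)
    (n : ℕ) (c : ℝ) : ((r * n - c : ℝ) : EReal) ≤ simD 0 (prodCh n W) c := by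
  obtain ⟨P, hP, hPr⟩ := compatMass_le_of_coe_lt_renyiCap_zero hW hr
  refine coe_sub_le_simD_zero (isDist_prodDist hP n) fun y => ?_
  calc compatMass (prodCh n W) (prodDist n P) y = ∏ i, compatMass W P (y i) :=
        compatMass_prodCh_prodDist W P y
    _ ≤ ∏ _i : Fin n, (2 : ℝ≥0∞) ^ (-r) := by gcongr with i; exact hPr (y i)
    _ = 2 ^ (-(r * n)) := by simp [← neg_mul, ENNReal.rpow_mul_natCast]

end MemorylessExtension

section Covering

variable {A B : Type*} [Fintype A]

lemma exists_card_uncovered_le {R : A → B → Prop} [∀ a b, Decidable (R a b)] {v : ℝ}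
    (hv : v ≤ 1) (h : ∀ T : Finset A, ∃ b, v * T.card ≤ ({a ∈ T | R a b} : Finset A).card)
    (M : ℕ) :
    ∃ f : Fin M → B,
      (({a | ∀ j, ¬ R a (f j)} : Finset A).card : ℝ) ≤ (1 - v) ^ M * Fintype.card A := by
  induction M with
  | zero => exact ⟨fun j => j.elim0, by simp⟩
  | succ M ih =>
    obtain ⟨f, hf⟩ := ih
    set T : Finset A := {a | ∀ j, ¬ R a (f j)} with hT
    obtain ⟨b, hb⟩ := h T
    have hsplit : (({a ∈ T | R a b} : Finset A).card : ℝ) +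
        ({a ∈ T | ¬ R a b} : Finset A).card = T.card := by
      exact_mod_cast T.card_filter_add_card_filter_not (R · b)
    have hcons : ({a | ∀ j, ¬ R a ((Fin.cons b f : Fin (M + 1) → B) j)} : Finset A) =
        {a ∈ T | ¬ R a b} := by
      ext a
      simp [hT, Fin.forall_fin_succ, and_comm]
    refine ⟨Fin.cons b f, ?_⟩
    calc _ = (({a ∈ T | ¬ R a b} : Finset A).card : ℝ) := by rw [hcons]
      _ ≤ (1 - v) * T.card := by linarith
      _ ≤ (1 - v) * ((1 - v) ^ M * Fintype.card A) :=
          mul_le_mul_of_nonneg_left hf (sub_nonneg.2 hv)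
      _ = (1 - v) ^ (M + 1) * Fintype.card A := by ring

lemma exists_cover_of_log_card_lt {R : A → B → Prop} [∀ a b, Decidable (R a b)] {v : ℝ}
    (hv : v ≤ 1) (h : ∀ T : Finset A, ∃ b, v * T.card ≤ ({a ∈ T | R a b} : Finset A).card)
    {M : ℕ} (hM : Real.log (Fintype.card A) < v * M) : ∃ f : Fin M → B, ∀ a, ∃ j, R a (f j) := by
  obtain ⟨f, hf⟩ := exists_card_uncovered_le hv h M
  have hlt : (1 - v) ^ M * (Fintype.card A : ℝ) < 1 :=
    calc (1 - v) ^ M * (Fintype.card A : ℝ)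
        ≤ Real.exp (-v) ^ M * Real.exp (Real.log (Fintype.card A)) := by
          gcongr
          · exact Real.one_sub_le_exp_neg v
          · exact Real.le_exp_log _
      _ = Real.exp (Real.log (Fintype.card A) - v * M) := by
          rw [← Real.exp_nat_mul, ← Real.exp_add]; ring_nf
      _ < 1 := Real.exp_lt_one_iff.2 (sub_neg.2 hM)
  have hempty : ({a | ∀ j, ¬ R a (f j)} : Finset A) = ∅ := by
    rw [← Finset.card_eq_zero, ← Nat.lt_one_iff]
    exact_mod_cast hf.trans_lt hlt
  refine ⟨f, fun a => ?_⟩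
  simpa using Finset.filter_eq_empty_iff.1 hempty (Finset.mem_univ a)

/-- For every weight on the inputs of `V` there is an output compatible with inputs that carry at
least a fraction `v` of its mass. Weights are not normalized, so that the property applies to
restrictions of a weight, as needed in the induction for memoryless extensions. -/
def HasCoverFraction (V : A → B → ℝ≥0∞) (v : ℝ≥0∞) : Prop :=
  ∀ g : A → ℝ≥0∞, ∃ y, v * ∑ x, g x ≤ compatMass V g y

lemma hasCoverFraction_of_forall_isDist [Nonempty B] {V : A → B → ℝ≥0∞} {v : ℝ≥0∞}
    (h : ∀ P : A → ℝ≥0∞, IsDist P → ∃ y, v ≤ compatMass V P y) : HasCoverFraction V v := by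
  intro g
  by_cases hzero : ∑ x, g x = 0
  · exact ⟨Classical.arbitrary B, by simp [hzero]⟩
  by_cases htop : ∑ x, g x = ⊤
  · obtain ⟨a, -, ha⟩ := ENNReal.sum_eq_top.1 htop
    obtain ⟨y, hy⟩ := h _ (isDist_ite_eq a)
    refine ⟨y, ?_⟩
    calc v * ∑ x, g x ≤ compatMass V (fun x => if x = a then 1 else 0) y * g a := by
          rw [htop, ha]; gcongr
      _ ≤ compatMass V g y := by
          rw [compatMass, Finset.sum_mul]
          refine Finset.sum_le_sum fun x _ => ?_
          split_ifs with hx <;> simp [hx]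
  · obtain ⟨y, hy⟩ := h (fun x => g x * (∑ x, g x)⁻¹) <| by
      rw [IsDist, ← Finset.sum_mul, ENNReal.mul_inv_cancel hzero htop]
    refine ⟨y, ?_⟩
    rwa [compatMass, ← Finset.sum_mul, ← div_eq_mul_inv,
      ENNReal.le_div_iff_mul_le (.inl hzero) (.inl htop)] at hy

lemma hasCoverFraction_prodCh [Fintype B] {W : A → B → ℝ≥0∞} {v : ℝ≥0∞}
    (h : HasCoverFraction W v) (n : ℕ) : HasCoverFraction (prodCh n W) (v ^ n) := by
  induction n with
  | zero => exact fun g => ⟨Fin.elim0, by simp [compatMass, prodCh]⟩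
  | succ n ih =>
    intro g
    obtain ⟨b, hb⟩ := h fun a => ∑ x : Fin n → A, g (Fin.cons a x)
    obtain ⟨y, hy⟩ := ih fun x => compatMass W (fun a => g (Fin.cons a x)) b
    refine ⟨Fin.cons b y, ?_⟩
    calc v ^ (n + 1) * ∑ x, g x
        = v ^ n * (v * ∑ a, ∑ x : Fin n → A, g (Fin.cons a x)) := by
          rw [sum_eq_sum_sum_cons, Finset.sum_comm, pow_succ, mul_assoc]
      _ ≤ v ^ n * ∑ x : Fin n → A, compatMass W (fun a => g (Fin.cons a x)) b := by
          gcongr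
          exact hb.trans_eq Finset.sum_comm
      _ ≤ compatMass (prodCh n W) (fun x => compatMass W (fun a => g (Fin.cons a x)) b) y := hy
      _ = compatMass (prodCh (n + 1) W) g (Fin.cons b y) := (compatMass_prodCh_cons g b y).symm

lemma HasCoverFraction.exists_toReal_mul_card_le {V : A → B → ℝ≥0∞} {v : ℝ≥0∞}
    (h : HasCoverFraction V v) (T : Finset A) :
    ∃ y, v.toReal * T.card ≤ ({x ∈ T | V x y ≠ 0} : Finset A).card := by
  obtain ⟨y, hy⟩ := h fun x => if x ∈ T then 1 else 0
  have hcompat : compatMass V (fun x => if x ∈ T then 1 else 0) y =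
      ({x ∈ T | V x y ≠ 0} : Finset A).card := by
    rw [compatMass, Finset.sum_ite_mem, Finset.sum_const, nsmul_one, Finset.filter_inter,
      Finset.univ_inter]
  rw [hcompat] at hy
  refine ⟨y, ?_⟩
  simpa using ENNReal.toReal_mono (ENNReal.natCast_ne_top _) hy

lemma HasCoverFraction.simD_zero_nonpos [Fintype B] {V : A → B → ℝ≥0∞} {v : ℝ≥0∞} {c : ℝ}
    (h : HasCoverFraction V v) (hv : v ≤ 1) (hc : 0 ≤ c)
    (hlog : Real.log (Fintype.card A) < v.toReal * ⌊(2 : ℝ) ^ c⌋₊) : simD 0 V c ≤ 0 := by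
  obtain ⟨f, hf⟩ := exists_cover_of_log_card_lt (ENNReal.toReal_mono ENNReal.one_ne_top hv)
    h.exists_toReal_mul_card_le hlog
  have hpos : 0 < ⌊(2 : ℝ) ^ c⌋₊ := Nat.floor_pos.2 (Real.one_le_rpow one_le_two hc)
  refine simD_zero_nonpos_of_cover hpos ?_ hf
  rw [Real.logb_le_iff_le_rpow one_lt_two (Nat.cast_pos.2 hpos)]
  exact Nat.floor_le (by positivity)

lemma hasCoverFraction_of_renyiCap_zero_lt [Fintype B] [Nonempty B] {W : A → B → ℝ≥0∞}
    (hW : IsChannel W) {r : ℝ} (hr : renyiCap 0 W < r) : HasCoverFraction W (2 ^ (-r)) :=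
  hasCoverFraction_of_forall_isDist fun _ hP =>
    (exists_lt_compatMass_of_renyiCap_zero_lt hW hr hP).imp fun _ => le_of_lt

end Covering

section ReliabilityFunction

variable {A B : Type*} [Fintype A] [Fintype B] {W : A → B → ℝ≥0∞} {r : ℝ}

lemma eventually_mul_lt_rpow_mul_floor {s : ℝ} (hr : 0 ≤ r) (hsr : s < r) (L : ℝ) :
    ∀ᶠ n : ℕ in atTop, n * L < ((2 : ℝ) ^ (-s)) ^ n * ⌊(2 : ℝ) ^ (r * n)⌋₊ := by
  have hbase : 1 < (2 : ℝ) ^ (r - s) := Real.one_lt_rpow one_lt_two (sub_pos.2 hsr)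
  have hlim := (tendsto_pow_const_div_const_pow_of_one_lt 1 hbase).mul_const L
  rw [zero_mul] at hlim
  filter_upwards [hlim.eventually_lt_const (show (0 : ℝ) < 1 / 2 by norm_num)] with n hn
  have hfloor : (2 : ℝ) ^ (r * n) / 2 < ⌊(2 : ℝ) ^ (r * n)⌋₊ :=
    Nat.div_two_lt_floor (Real.one_le_rpow one_le_two (by positivity))
  calc (n : ℝ) * L = (n : ℝ) ^ 1 / ((2 : ℝ) ^ (r - s)) ^ n * L * ((2 : ℝ) ^ (r - s)) ^ n := by
        field_simp
    _ < 1 / 2 * ((2 : ℝ) ^ (r - s)) ^ n := by gcongr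
    _ = ((2 : ℝ) ^ (-s)) ^ n * ((2 : ℝ) ^ (r * n) / 2) := by
        rw [Real.rpow_mul_natCast zero_le_two, sub_eq_neg_add, Real.rpow_add two_pos, mul_pow]
        ring
    _ < ((2 : ℝ) ^ (-s)) ^ n * ⌊(2 : ℝ) ^ (r * n)⌋₊ := by gcongr

lemma eventually_simD_zero_prodCh_nonpos [Nonempty A] [Nonempty B] (hW : IsChannel W)
    (hr : renyiCap 0 W < r) : ∀ᶠ n : ℕ in atTop, simD 0 (prodCh n W) (r * n) ≤ 0 := by
  obtain ⟨s, hcap, hsr⟩ := EReal.lt_iff_exists_real_btwn.1 hr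
  rw [EReal.coe_lt_coe_iff] at hsr
  have hs : 0 ≤ s := by exact_mod_cast (renyiCap_zero_nonneg hW).trans hcap.le
  have hv : (2 : ℝ≥0∞) ^ (-s) ≤ 1 := by
    simpa using ENNReal.rpow_le_rpow_of_exponent_le one_le_two (neg_nonpos.2 hs)
  have hcover := hasCoverFraction_of_renyiCap_zero_lt hW hcap
  filter_upwards [eventually_mul_lt_rpow_mul_floor (hs.trans hsr.le) hsr
    (Real.log (Fintype.card A))] with n hn
  refine (hasCoverFraction_prodCh hcover n).simD_zero_nonpos (pow_le_one₀ zero_le hv)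
    (mul_nonneg (hs.trans hsr.le) n.cast_nonneg) ?_
  simpa [← ENNReal.toReal_rpow] using hn

lemma rateOK_const_mul {s : ℝ} (hs : 0 ≤ s) (hsr : s ≤ r) : RateOK r fun n => s * n := by
  refine ⟨fun n => by positivity, limsup_le_of_le (h := .of_forall fun n => ?_)⟩
  exact EReal.coe_le_coe_iff.2 <|
    (div_le_of_le_mul₀ n.cast_nonneg hs le_rfl).trans hsr

lemma coe_neg_one_div_natCast_nonpos (n : ℕ) : (((-1 : ℝ) / n : ℝ) : EReal) ≤ 0 :=
  EReal.coe_nonpos.2 <| div_nonpos_of_nonpos_of_nonneg (by norm_num) n.cast_nonneg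

lemma Erf_zero_eq_top [Nonempty A] [Nonempty B] (hW : IsChannel W) (hr : renyiCap 0 W < r) :
    Erf 0 W r = ⊤ := by
  have hr0 : 0 ≤ r := by exact_mod_cast (renyiCap_zero_nonneg hW).trans hr.le
  refine top_le_iff.1 <| le_iSup_of_le ⟨_, rateOK_const_mul hr0 le_rfl⟩ <|
    le_liminf_of_le (h := ?_)
  filter_upwards [eventually_simD_zero_prodCh_nonpos hW hr, eventually_gt_atTop 0] with n hn hpos
  rw [eLog2_of_nonpos hn, EReal.coe_mul_bot_of_neg]
  exact div_neg_of_neg_of_pos (by norm_num) (Nat.cast_pos.2 hpos)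

lemma RateOK.eventually_add_one_le_mul {c : ℕ → ℝ} (hc : RateOK r c) {s : ℝ} (hrs : r < s) :
    ∀ᶠ n : ℕ in atTop, c n + 1 ≤ s * n := by
  obtain ⟨t, hrt, hts⟩ := exists_between hrs
  have hlimsup := eventually_lt_of_limsup_lt (hc.2.trans_lt (EReal.coe_lt_coe_iff.2 hrt))
  have hgap : Tendsto (fun n : ℕ => (s - t) * (n : ℝ)) atTop atTop :=
    tendsto_natCast_atTop_atTop.const_mul_atTop (sub_pos.2 hts)
  filter_upwards [hlimsup, hgap.eventually_ge_atTop 1, eventually_gt_atTop 0] with n hn hgap hpos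
  rw [EReal.coe_lt_coe_iff, div_lt_iff₀ (Nat.cast_pos.2 hpos)] at hn
  linarith

lemma Erf_zero_nonpos (hW : IsChannel W) (hr : r < renyiCap 0 W) : Erf 0 W r ≤ 0 := by
  obtain ⟨s, hrs, hs⟩ := EReal.lt_iff_exists_real_btwn.1 hr
  refine iSup_le fun ⟨c, hc⟩ => liminf_le_of_frequently_le' (Eventually.frequently ?_)
  filter_upwards [hc.eventually_add_one_le_mul (EReal.coe_lt_coe_iff.1 hrs)] with n hn
  have hone : 1 ≤ simD 0 (prodCh n W) (c n) :=
    (EReal.coe_le_coe_iff.2 (by linarith)).trans (coe_mul_sub_le_simD_zero_prodCh hW hs n (c n))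
  exact EReal.mul_nonpos_iff.2 <| .inr ⟨coe_neg_one_div_natCast_nonpos n, eLog2_nonneg hone⟩

lemma tendsto_neg_one_div_mul_logb_mul {C : ℝ} (hC : 0 < C) :
    Tendsto (fun n : ℕ => -1 / (n : ℝ) * Real.logb 2 (n * C)) atTop (nhds 0) := by
  have hlim := ((Real.tendsto_pow_logb_div_mul_add_atTop (b := 2) 1 0 1 one_ne_zero).comp
    (tendsto_natCast_atTop_atTop.atTop_mul_const hC)).const_mul (-C)
  rw [mul_zero] at hlim
  refine hlim.congr fun n => ?_
  simp only [Function.comp_apply, pow_one, one_mul, add_zero]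
  field_simp

lemma Erf_zero_nonneg [Nonempty B] (hW : IsChannel W) (hr : 0 ≤ r) : 0 ≤ Erf 0 W r := by
  have hlim := EReal.tendsto_coe.2 <|
    tendsto_neg_one_div_mul_logb_mul (C := Fintype.card B) (Nat.cast_pos.2 Fintype.card_pos)
  refine le_iSup_of_le ⟨_, rateOK_const_mul le_rfl hr⟩ ?_
  rw [← EReal.coe_zero, ← hlim.liminf_eq]
  refine liminf_le_liminf (.of_forall fun n => ?_)
  have hlogb : Real.logb 2 (Fintype.card B) ≤ Fintype.card B := by
    rw [Real.logb_le_iff_le_rpow one_lt_two (Nat.cast_pos.2 Fintype.card_pos), Real.rpow_natCast]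
    exact_mod_cast Nat.lt_two_pow_self.le
  have hsimD : simD 0 (prodCh n W) (0 * n) ≤ ((n * Fintype.card B : ℝ) : EReal) := by
    rw [zero_mul]
    refine (simD_zero_cost_zero_le_logb_card hW.exists_prodCh_ne_zero).trans ?_
    rw [Fintype.card_fun, Fintype.card_fin, Nat.cast_pow, Real.logb_pow, EReal.coe_le_coe_iff]
    gcongr
  simpa only [EReal.coe_mul, mul_comm] using
    EReal.mul_le_mul_of_nonpos_right (eLog2_le_coe_logb hsimD) (coe_neg_one_div_natCast_nonpos n)

end ReliabilityFunction

/-- **Reliability function at order `α = 0`** (Theorem 2, case `α = 0`):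
`E_rf^{(0)}(W,r) = ∞` for every `r > I_0(W)`, and `E_rf^{(0)}(W,r) = 0` for every
`0 ≤ r < I_0(W)`. -/
theorem reliability_function_order_zero
    {X Y : Type*} [Fintype X] [Fintype Y] [Nonempty X] [Nonempty Y]
    (W : X → Y → ℝ≥0∞) (hW : IsChannel W) :
    (∀ r : ℝ, renyiCap 0 W < (r : EReal) → Erf 0 W r = ⊤) ∧
    (∀ r : ℝ, 0 ≤ r → (r : EReal) < renyiCap 0 W → Erf 0 W r = 0) := by
  exact ⟨fun _ hr => Erf_zero_eq_top hW hr,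
    fun _ hr0 hr => le_antisymm (Erf_zero_nonpos hW hr) (Erf_zero_nonneg hW hr0)⟩

end RST
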